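/- Let X be a metric space with metric d, T : X → X a continuous map, and u ∈ X a point whose orbit {T^n u : n ≥ 0} has compact closure. Assume: (a) d(T x, T y) ≤ d(x, y) for all x, y in the closure of the orbit of u; (b) for every integer N ≥ 1, the ω-limit set of u under T^N equals the ω-limit set ω(u) of u under T; and (c) for every integer N ≥ 1, there is exactly one Borel probability measure μ on X with μ(ω(u)) = 1 that is invariant under T^N (i.e. μ(T^{-N} B) = μ(B) for every Borel set B). Then ω(u) is a connected set. -/

import Mathlib

open Filter Topology

/-- The ω-limit set of `u` under `T`: all limits of convergent subsequences of
the orbit sequence `(T^[n] u)`. -/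
def omegaLimitSet {X : Type*} [MetricSpace X] (T : X → X) (u : X) : Set X :=
  {x | ∃ φ : ℕ → ℕ, StrictMono φ ∧ Tendsto (fun n => T^[φ n] u) atTop (𝓝 x)}

/-!
Suppose `ω(u)` splits into two disjoint compact pieces, and let `δ` be such that points near one
piece are at distance at least `δ` from points near the other. Total boundedness of the orbit gives
two orbit points `T^m u` and `T^(m+N) u` at distance less than `δ`, and non-expansiveness propagates
this to `dist (T^(n+N) u) (T^n u) < δ` for all `n ≥ m`. The `T^N`-orbit of `u` therefore makes jumps
shorter than `δ`, while by compactness it approaches `ω(u)`, so it eventually stays near a single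
piece. Hence the `ω`-limit set of `u` under `T^N`, which is all of `ω(u)`, lies in that piece.
-/

section PseudoMetric

variable {X : Type*} [PseudoMetricSpace X]

lemma exists_pos_forall_thickening_le_dist {A B : Set X} (hA : IsCompact A) (hB : IsClosed B)
    (hAB : Disjoint A B) :
    ∃ δ > 0, ∀ a ∈ Metric.thickening δ A, ∀ b ∈ Metric.thickening δ B, δ ≤ dist a b := by
  obtain ⟨δ, hδ, hdisj⟩ := hAB.exists_thickenings hA hB
  refine ⟨δ / 2, half_pos hδ, fun a ha b hb => ?_⟩
  by_contra! hlt
  have hbA : b ∈ Metric.thickening (δ / 2 + δ / 2) A :=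
    Metric.thickening_thickening_subset _ _ A <|
      Metric.mem_thickening_iff.2 ⟨a, ha, by rwa [dist_comm]⟩
  rw [add_halves] at hbA
  exact hdisj.notMem_of_mem_left hbA (Metric.thickening_mono (half_le_self hδ.le) B hb)

lemma eventually_mem_or_eventually_mem_of_dist_succ_lt {x : ℕ → X} {A B : Set X} {δ : ℝ}
    (hsep : ∀ a ∈ A, ∀ b ∈ B, δ ≤ dist a b) (hmem : ∀ᶠ n in atTop, x n ∈ A ∪ B)
    (hstep : ∀ᶠ n in atTop, dist (x n) (x (n + 1)) < δ) :
    (∀ᶠ n in atTop, x n ∈ A) ∨ ∀ᶠ n in atTop, x n ∈ B := by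
  obtain ⟨M, hM⟩ := eventually_atTop.1 (hmem.and hstep)
  by_cases hA : ∃ m ≥ M, x m ∈ A
  · obtain ⟨m, hmM, hm⟩ := hA
    refine .inl (eventually_atTop.2 ⟨m, fun n hn => ?_⟩)
    induction n, hn using Nat.le_induction with
    | base => exact hm
    | succ n hn ih =>
      exact (hM (n + 1) (by omega)).1.resolve_right fun hB =>
        (hsep _ ih _ hB).not_gt (hM n (by omega)).2
  · push Not at hA
    exact .inr (eventually_atTop.2 ⟨M, fun n hn => (hM n hn).1.resolve_left (hA n hn)⟩)

lemma exists_dist_add_lt_of_totallyBounded {x : ℕ → X}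
    (hx : TotallyBounded (Set.range x)) {ε : ℝ} (hε : 0 < ε) :
    ∃ m N : ℕ, 1 ≤ N ∧ dist (x m) (x (m + N)) < ε := by
  obtain ⟨t, ht, hcover⟩ := Metric.totallyBounded_iff.1 hx (ε / 2) (half_pos hε)
  have hcenter (n : ℕ) : ∃ c : t, dist (x n) c < ε / 2 := by
    simpa using hcover (Set.mem_range_self n)
  choose c hc using hcenter
  have := ht.to_subtype
  obtain ⟨m, n, hmn, heq⟩ : ∃ m n, m < n ∧ c m = c n := by
    obtain ⟨m, n, hne, heq⟩ := Finite.exists_ne_map_eq_of_infinite c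
    exact hne.lt_or_gt.elim (fun h => ⟨m, n, h, heq⟩) fun h => ⟨n, m, h, heq.symm⟩
  refine ⟨m, n - m, by omega, ?_⟩
  rw [Nat.add_sub_cancel' hmn.le, ← add_halves ε]
  exact (dist_triangle_right _ _ _).trans_lt (add_lt_add (hc m) (heq ▸ hc n))

lemma exists_pos_forall_setOf_mapClusterPt_subset_or_subset {A B : Set X} (hA : IsCompact A)
    (hB : IsClosed B) (hAB : Disjoint A B) :
    ∃ δ > 0, ∀ (x : ℕ → X) (K : Set X), IsCompact K → (∀ n, x n ∈ K) →
      {y | MapClusterPt y atTop x} ⊆ A ∪ B →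
      (∀ᶠ n in atTop, dist (x n) (x (n + 1)) < δ) →
      {y | MapClusterPt y atTop x} ⊆ A ∨ {y | MapClusterPt y atTop x} ⊆ B := by
  obtain ⟨δ, hδ, hsep⟩ := exists_pos_forall_thickening_le_dist hA hB hAB
  refine ⟨δ, hδ, fun x K hK hxK hcluster hstep => ?_⟩
  have hnear : ∀ᶠ n in atTop, x n ∈ Metric.thickening δ A ∪ Metric.thickening δ B := by
    rw [← Metric.thickening_union]
    exact hK.adherence_nhdset (tendsto_principal.2 (.of_forall hxK)) Metric.isOpen_thickening
      fun y _ hy => Metric.self_subset_thickening hδ _ (hcluster hy)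
  have hfreq {C : Set X} {y : X} (hyC : y ∈ C) (hy : MapClusterPt y atTop x) :
      ∃ᶠ n in atTop, x n ∈ Metric.thickening δ C :=
    hy.frequently <| Metric.isOpen_thickening.mem_nhds (Metric.self_subset_thickening hδ C hyC)
  have hdisj {p : X} (hpA : p ∈ Metric.thickening δ A) : p ∉ Metric.thickening δ B :=
    fun hpB => (hsep p hpA p hpB).not_gt (by rwa [dist_self])
  refine (eventually_mem_or_eventually_mem_of_dist_succ_lt hsep hnear hstep).imp ?_ ?_
  · exact fun hev y hy => (hcluster hy).resolve_right fun hyB =>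
      hfreq hyB hy (hev.mono fun _ => hdisj)
  · exact fun hev y hy => (hcluster hy).resolve_left fun hyA =>
      hfreq hyA hy (hev.mono fun _ hnB hnA => hdisj hnA hnB)

variable {T : X → X} {u : X}

lemma antitone_dist_iterate_add
    (hne : ∀ x ∈ Set.range fun n => T^[n] u, ∀ y ∈ Set.range fun n => T^[n] u,
      dist (T x) (T y) ≤ dist x y) (N : ℕ) :
    Antitone fun n => dist (T^[n] u) (T^[n + N] u) := by
  refine antitone_nat_of_succ_le fun n => ?_
  rw [Nat.add_right_comm, Function.iterate_succ_apply', Function.iterate_succ_apply']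
  exact hne _ ⟨n, rfl⟩ _ ⟨n + N, rfl⟩

lemma exists_eventually_dist_iterate_add_lt
    (hu : TotallyBounded (Set.range fun n => T^[n] u))
    (hne : ∀ x ∈ Set.range fun n => T^[n] u, ∀ y ∈ Set.range fun n => T^[n] u,
      dist (T x) (T y) ≤ dist x y) {ε : ℝ} (hε : 0 < ε) :
    ∃ N : ℕ, 1 ≤ N ∧ ∀ᶠ n in atTop, dist (T^[n] u) (T^[n + N] u) < ε := by
  obtain ⟨m, N, hN, hm⟩ := exists_dist_add_lt_of_totallyBounded hu hε
  exact ⟨N, hN, (eventually_ge_atTop m).mono fun n hn =>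
    (antitone_dist_iterate_add hne N hn).trans_lt hm⟩

end PseudoMetric

section OmegaLimitSet

variable {X : Type*} [MetricSpace X] {T : X → X} {u : X}

lemma omegaLimitSet_eq_setOf_mapClusterPt :
    omegaLimitSet T u = {x | MapClusterPt x atTop fun n => T^[n] u} :=
  Set.Subset.antisymm (fun _ ⟨_, hφ, hlim⟩ => .of_comp hφ.tendsto_atTop hlim.mapClusterPt)
    fun _ hx => MapClusterPt.tendsto_subseq hx

lemma isClosed_omegaLimitSet : IsClosed (omegaLimitSet T u) := by
  rw [omegaLimitSet_eq_setOf_mapClusterPt]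
  exact isClosed_setOfPred_clusterPt

lemma omegaLimitSet_subset_closure_orbit :
    omegaLimitSet T u ⊆ closure (Set.range fun n => T^[n] u) :=
  fun _ ⟨φ, _, hlim⟩ => mem_closure_of_tendsto hlim (.of_forall fun n => ⟨φ n, rfl⟩)

lemma omegaLimitSet_iterate_subset {N : ℕ} (hN : 1 ≤ N) :
    omegaLimitSet T^[N] u ⊆ omegaLimitSet T u := by
  rintro x ⟨φ, hφ, hlim⟩
  refine ⟨fun n => N * φ n, hφ.const_mul hN, ?_⟩
  simpa only [Function.iterate_mul] using hlim

lemma omegaLimitSet_nonempty (hc : IsCompact (closure (Set.range fun n => T^[n] u))) :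
    (omegaLimitSet T u).Nonempty := by
  obtain ⟨x, -, φ, hφ, hlim⟩ := hc.tendsto_subseq fun n => subset_closure ⟨n, rfl⟩
  exact ⟨x, φ, hφ, hlim⟩

lemma isPreconnected_omegaLimitSet_of_eventually_dist_lt
    (hc : IsCompact (closure (Set.range fun n => T^[n] u)))
    (hperiod : ∀ ε > 0, ∃ N : ℕ, 1 ≤ N ∧ ∀ᶠ n in atTop, dist (T^[n] u) (T^[n + N] u) < ε)
    (homega : ∀ N : ℕ, 1 ≤ N → omegaLimitSet T u ⊆ omegaLimitSet (T^[N]) u) :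
    IsPreconnected (omegaLimitSet T u) := by
  have hcompact := hc.of_isClosed_subset isClosed_omegaLimitSet omegaLimitSet_subset_closure_orbit
  refine (isPreconnected_iff_subset_of_fully_disjoint_closed isClosed_omegaLimitSet).2
    fun A B hA hB hcover hdisj => ?_
  obtain ⟨δ, hδ, hsplit⟩ := exists_pos_forall_setOf_mapClusterPt_subset_or_subset
    (hcompact.inter_right hA) hB (hdisj.mono_left Set.inter_subset_right)
  obtain ⟨N, hN, hnear⟩ := hperiod δ hδ
  have hstep : ∀ᶠ n in atTop, dist ((T^[N])^[n] u) ((T^[N])^[n + 1] u) < δ := by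
    simpa only [← Function.iterate_mul, Nat.mul_succ, id_eq] using
      (tendsto_id.const_mul_atTop' hN).eventually hnear
  have horbit (n : ℕ) : (T^[N])^[n] u ∈ closure (Set.range fun n => T^[n] u) :=
    subset_closure ⟨N * n, congrFun (Function.iterate_mul T N n) u⟩
  have hω : omegaLimitSet T^[N] u = omegaLimitSet T u :=
    (omegaLimitSet_iterate_subset hN).antisymm (homega N hN)
  rw [omegaLimitSet_eq_setOf_mapClusterPt] at hω
  have hpieces : omegaLimitSet T u ⊆ omegaLimitSet T u ∩ A ∪ B :=
    fun x hx => (hcover hx).imp_left fun hxA => ⟨hx, hxA⟩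
  have hsub := hsplit _ _ hc horbit (hω.trans_subset hpieces) hstep
  rw [hω] at hsub
  exact hsub.imp_left fun h => h.trans Set.inter_subset_right

end OmegaLimitSet

theorem omegaLimitSet_connected_general {X : Type*} [MetricSpace X] (T : X → X) (u : X)
    (hc : IsCompact (closure (Set.range fun n => T^[n] u)))
    (hne : ∀ x ∈ Set.range fun n => T^[n] u, ∀ y ∈ Set.range fun n => T^[n] u,
      dist (T x) (T y) ≤ dist x y)
    (homega : ∀ N : ℕ, 1 ≤ N → omegaLimitSet T u ⊆ omegaLimitSet (T^[N]) u) :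
    IsConnected (omegaLimitSet T u) := by
  have hbdd : TotallyBounded (Set.range fun n => T^[n] u) :=
    hc.totallyBounded.subset subset_closure
  exact ⟨omegaLimitSet_nonempty hc, isPreconnected_omegaLimitSet_of_eventually_dist_lt hc
    (fun _ hε => exists_eventually_dist_iterate_add_lt hbdd hne hε) homega⟩

/-- If `T` is non-expansive on the orbit closure of `u`, the ω-limit set of `u`
under `T^N` equals `ω(u)` for every `N ≥ 1`, and for every `N ≥ 1` the system
`(ω(u), T^N)` is uniquely ergodic, then `ω(u)` is connected. -/
theorem omegaLimitSet_connected {X : Type*} [MetricSpace X]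
    [MeasurableSpace X] [BorelSpace X]
    (T : X → X) (hT : Continuous T) (u : X)
    (hc : IsCompact (closure (Set.range fun n => T^[n] u)))
    (hne : ∀ x ∈ closure (Set.range fun n => T^[n] u),
      ∀ y ∈ closure (Set.range fun n => T^[n] u), dist (T x) (T y) ≤ dist x y)
    (homega : ∀ N : ℕ, 1 ≤ N → omegaLimitSet (T^[N]) u = omegaLimitSet T u)
    (herg : ∀ N : ℕ, 1 ≤ N → ∃! μ : MeasureTheory.Measure X,
      MeasureTheory.IsProbabilityMeasure μ ∧ μ (omegaLimitSet T u) = 1 ∧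
      ∀ B : Set X, MeasurableSet B → μ (T^[N] ⁻¹' B) = μ B) :
    IsConnected (omegaLimitSet T u) :=
  omegaLimitSet_connected_general T u hc
    (fun x hx y hy => hne x (subset_closure hx) y (subset_closure hy))
    (fun N hN => (homega N hN).ge)
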